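/- Let d ≥ 2, let δ ∈ (0,1) and ε > 0, and set C = (2d − 2 + 2ε(d−1)/3)/ε². If n is a positive integer with n ≥ C · log(2d/δ), and (x_i)_{i=1}^n are independent random vectors drawn uniformly from the sphere of radius sqrt(d/n) in ℝ^d with frame operator S = Σ_{i=1}^n x_i x_i^*, then the probability that ‖S − I_d‖_op ≥ ε is at most δ. -/

import Mathlib

open MeasureTheory ProbabilityTheory Real

noncomputable section

/-- The frame operator `S v = ∑ i, ⟪x i, v⟫ • x i` of a finite family of vectors in `ℝ^d`,
as a continuous linear map on Euclidean space. -/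
def frameOperator {d n : ℕ} (x : Fin n → EuclideanSpace ℝ (Fin d)) :
    EuclideanSpace ℝ (Fin d) →L[ℝ] EuclideanSpace ℝ (Fin d) :=
  ∑ i, (innerSL ℝ (x i)).smulRight (x i)

section GT
open scoped Matrix Matrix.Norms.L2Operator
open Filter Topology

/-- Cauchy-Schwarz for the Hilbert-Schmidt inner product. -/
lemma trace_cs {d : ℕ} (X Y : Matrix (Fin d) (Fin d) ℝ) :
    |(X * Y).trace| ≤ √((Xᵀ * X).trace) * √((Yᵀ * Y).trace) := by
  have h1 : (X * Y).trace = ∑ p : Fin d × Fin d, X p.1 p.2 * Y p.2 p.1 := by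
    rw [Fintype.sum_prod_type]; simp [Matrix.trace, Matrix.mul_apply]
  have h2 : (Xᵀ * X).trace = ∑ p : Fin d × Fin d, X p.1 p.2 ^ 2 := by
    rw [Fintype.sum_prod_type_right]; simp [Matrix.trace, Matrix.mul_apply, sq]
  have h3 : (Yᵀ * Y).trace = ∑ p : Fin d × Fin d, Y p.2 p.1 ^ 2 := by
    rw [Fintype.sum_prod_type]; simp [Matrix.trace, Matrix.mul_apply, sq]
  rw [← Real.sqrt_mul (by rw [h2]; positivity), h1, h2, h3]
  apply Real.abs_le_sqrt
  exact Finset.sum_mul_sq_le_sq_mul_sq _ _ _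

lemma trace_mul_pow_comm {d : ℕ} (A B : Matrix (Fin d) (Fin d) ℝ) (k : ℕ) :
    ((A * B) ^ k).trace = ((B * A) ^ k).trace := by
  cases k with
  | zero => simp
  | succ k =>
    have h : (A * B) ^ (k+1) = A * (B * A) ^ k * B := by
      rw [pow_succ, ← mul_assoc]
      congr 1
      exact (SemiconjBy.pow_right (a := A) (x := B * A) (y := A * B)
        (by simp [SemiconjBy, mul_assoc]) k).eq.symm
    rw [h, Matrix.trace_mul_comm, ← mul_assoc, ← pow_succ']

lemma trace_pow_aux {d : ℕ} (k : ℕ) :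
    (∀ X : Matrix (Fin d) (Fin d) ℝ, |(X ^ (2 ^ (k+1))).trace| ≤ ((Xᵀ * X) ^ (2 ^ k)).trace) ∧
    (∀ A B : Matrix (Fin d) (Fin d) ℝ, Aᵀ = A → Bᵀ = B →
      ((A * B) ^ (2 ^ k)).trace ≤ (A ^ (2 ^ k) * B ^ (2 ^ k)).trace) := by
  induction k with
  | zero =>
    refine ⟨?_, by intro A B _ _; simp⟩
    intro X
    have := trace_cs X X
    rw [Real.mul_self_sqrt] at this
    · simpa [sq] using this
    · simp only [Matrix.trace, Matrix.mul_apply, Matrix.diag_apply, Matrix.transpose_apply]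
      exact Finset.sum_nonneg fun i _ => Finset.sum_nonneg fun j _ => mul_self_nonneg _
  | succ k ih =>
    obtain ⟨hP, hQ⟩ := ih
    constructor
    · intro X
      have h0 : X ^ (2 ^ (k+1+1)) = (X ^ 2) ^ (2 ^ (k+1)) := by
        rw [← pow_mul, ← pow_succ']
      rw [h0]
      refine (hP (X ^ 2)).trans ?_
      have h1 : (X ^ 2)ᵀ * X ^ 2 = Xᵀ * (Xᵀ * X * X) := by
        simp [sq, Matrix.transpose_mul, mul_assoc]
      rw [h1, trace_mul_pow_comm]
      have h2 : Xᵀ * X * X * Xᵀ = (Xᵀ * X) * (X * Xᵀ) := by simp [mul_assoc]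
      have hs1 : (Xᵀ * X)ᵀ = Xᵀ * X := by simp
      have hs2 : (X * Xᵀ)ᵀ = X * Xᵀ := by simp
      rw [h2]
      refine (hQ _ _ hs1 hs2).trans ((le_abs_self _).trans ((trace_cs _ _).trans ?_))
      rw [Matrix.transpose_pow, Matrix.transpose_pow, hs1, hs2, ← pow_add, ← pow_add,
        trace_mul_pow_comm X Xᵀ, Real.mul_self_sqrt, ← two_mul, ← pow_succ']
      have h5 := (abs_nonneg _).trans (hP ((Xᵀ * X)))
      rw [hs1, ← sq, ← pow_mul, ← pow_succ', pow_succ, mul_two] at h5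
      exact h5
    · intro A B hA hB
      refine (le_abs_self _).trans ((hP (A * B)).trans ?_)
      have h1 : (A * B)ᵀ * (A * B) = B * (A ^ 2 * B) := by
        rw [Matrix.transpose_mul, hA, hB]; simp [sq, mul_assoc]
      rw [h1, trace_mul_pow_comm]
      have h2 : A ^ 2 * B * B = A ^ 2 * B ^ 2 := by simp [sq, mul_assoc]
      rw [h2]
      refine (hQ (A ^ 2) (B ^ 2) ?_ ?_).trans ?_
      · rw [Matrix.transpose_pow, hA]
      · rw [Matrix.transpose_pow, hB]
      · rw [← pow_mul, ← pow_mul, ← pow_succ']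

lemma norm_pow_sub_pow_le' {R : Type*} [NormedRing R] [NormOneClass R] (x y : R) (M : ℝ)
    (hx : ‖x‖ ≤ M) (hy : ‖y‖ ≤ M) (n : ℕ) :
    ‖x ^ n - y ^ n‖ ≤ n * M ^ (n - 1) * ‖x - y‖ := by
  have hM : 0 ≤ M := (norm_nonneg _).trans hx
  induction n with
  | zero => simp
  | succ n ih =>
    have e : x ^ (n+1) - y ^ (n+1) = x ^ n * (x - y) + (x ^ n - y ^ n) * y := by
      rw [pow_succ, pow_succ]; noncomm_ring
    rw [e]
    have h1 : ‖x ^ n * (x - y)‖ ≤ M ^ n * ‖x - y‖ :=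
      (norm_mul_le _ _).trans (by gcongr; exact (norm_pow_le _ _).trans (by gcongr))
    have h2 : ‖(x ^ n - y ^ n) * y‖ ≤ (n * M ^ (n - 1) * ‖x - y‖) * M :=
      (norm_mul_le _ _).trans (by gcongr)
    refine (norm_add_le _ _).trans ((add_le_add h1 h2).trans (le_of_eq ?_))
    cases n with
    | zero => simp
    | succ m => simp only [Nat.add_sub_cancel]; push_cast; ring

lemma lie_trotter {R : Type*} [NormedRing R] [NormOneClass R] [NormedAlgebra ℝ R]
    [CompleteSpace R] (A B : R) :
    Tendsto (fun n : ℕ => (NormedSpace.exp ((1 / ((n:ℝ) + 1)) • A) *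
      NormedSpace.exp ((1 / ((n:ℝ) + 1)) • B)) ^ (n + 1)) atTop
      (𝓝 (NormedSpace.exp (A + B))) := by
  let _ : NormedAlgebra ℚ R := NormedAlgebra.restrictScalars ℚ ℝ R
  set f : ℝ → R := fun t => NormedSpace.exp (t • A) * NormedSpace.exp (t • B)
  set g : ℝ → R := fun t => NormedSpace.exp (t • (A + B))
  have hexp : ∀ (C : R), HasDerivAt (fun t : ℝ => NormedSpace.exp (t • C)) C 0 := by
    intro C
    have := hasDerivAt_exp_smul_const (𝕂 := ℝ) C (0 : ℝ)
    simpa using this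
  have hd : HasDerivAt (fun t => f t - g t) 0 0 := by
    have := ((hexp A).mul (hexp B)).sub (hexp (A + B))
    exact this.congr_deriv (by simp)
  have h0 : f 0 - g 0 = 0 := by simp [f, g]
  have hlo := (hasDerivAt_iff_isLittleO_nhds_zero.1 hd)
  simp only [zero_add, h0, smul_zero, sub_zero] at hlo
  have hnorm : ∀ C : R, ‖NormedSpace.exp C‖ ≤ Real.exp ‖C‖ := by
    intro C
    have h1 := NormedSpace.exp_series_hasSum_exp' (𝕂 := ℝ) C
    have h2 := NormedSpace.exp_series_hasSum_exp' (𝕂 := ℝ) ‖C‖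
    rw [← Real.exp_eq_exp_ℝ] at h2
    rw [← h1.tsum_eq]
    refine tsum_of_norm_bounded h2 fun i => ?_
    rw [norm_smul, smul_eq_mul, Real.norm_of_nonneg (by positivity)]
    gcongr
    exact norm_pow_le _ _
  set K := ‖A‖ + ‖B‖
  have hs : Tendsto (fun n : ℕ => (1 / ((n:ℝ) + 1))) atTop (𝓝 0) :=
    tendsto_one_div_add_atTop_nhds_zero_nat
  have hlo2 := hlo.comp_tendsto hs
  rw [tendsto_iff_norm_sub_tendsto_zero]
  have hb : ∀ n : ℕ, ‖f (1 / ((n:ℝ) + 1)) ^ (n+1) - NormedSpace.exp (A + B)‖ ≤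
      Real.exp K * (((n:ℝ)+1) * ‖f (1 / ((n:ℝ) + 1)) - g (1 / ((n:ℝ) + 1))‖) := by
    intro n
    set t : ℝ := 1 / ((n:ℝ) + 1) with ht
    have htp : 0 < t := by positivity
    have hg : NormedSpace.exp (A + B) = g t ^ (n+1) := by
      have := NormedSpace.exp_nsmul (n+1) (t • (A + B))
      simp only [g]
      rw [← this]
      congr 1
      rw [← Nat.cast_smul_eq_nsmul ℝ, smul_smul, ht]
      push_cast
      rw [mul_one_div_cancel (by positivity), one_smul]
    have hnt : ∀ C : R, ‖t • C‖ = t * ‖C‖ := fun C => by rw [norm_smul, Real.norm_of_nonneg htp.le]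
    have hfM : ‖f t‖ ≤ Real.exp (t * K) := by
      refine (norm_mul_le _ _).trans ?_
      rw [mul_add, Real.exp_add, ← hnt, ← hnt]
      gcongr <;> exact hnorm _
    have hgM : ‖g t‖ ≤ Real.exp (t * K) := by
      refine (hnorm _).trans ?_
      rw [hnt]
      gcongr
      exact norm_add_le _ _
    rw [hg]
    refine (norm_pow_sub_pow_le' _ _ _ hfM hgM (n+1)).trans ?_
    rw [← Real.exp_nat_mul]
    have : Real.exp (((n + 1 - 1 : ℕ):ℝ) * (t * K)) ≤ Real.exp K := by
      gcongr
      simp only [Nat.add_sub_cancel]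
      rw [← mul_assoc]
      have : (n:ℝ) * t ≤ 1 := by
        rw [ht, mul_one_div, div_le_one (by positivity)]; linarith
      have hK : 0 ≤ K := by positivity
      nlinarith
    push_cast at this ⊢
    calc _ ≤ ((n:ℝ)+1) * Real.exp K * ‖f t - g t‖ := by gcongr
      _ = _ := by ring
  refine squeeze_zero (fun n => norm_nonneg _) hb ?_
  have h3 : Tendsto (fun n : ℕ => ((n:ℝ)+1) * ‖f (1 / ((n:ℝ) + 1)) - g (1 / ((n:ℝ) + 1))‖)
      atTop (𝓝 0) := by
    have := hlo2.norm_left.tendsto_div_nhds_zero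
    refine this.congr fun n => ?_
    simp only [Function.comp]
    field_simp
  simpa using h3.const_mul (Real.exp K)

theorem golden_thompson {d : ℕ} (A B : Matrix (Fin d) (Fin d) ℝ) (hA : Aᵀ = A) (hB : Bᵀ = B) :
    (NormedSpace.exp (A + B)).trace ≤ (NormedSpace.exp A * NormedSpace.exp B).trace := by
  rcases Nat.eq_zero_or_pos d with rfl | hd
  · simp [Matrix.trace]
  have : Nonempty (Fin d) := ⟨⟨0, hd⟩⟩
  have h := lie_trotter A B
  have hsub : Tendsto (fun k : ℕ => 2 ^ k - 1) atTop (atTop : Filter ℕ) := by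
    refine tendsto_atTop_mono (fun k => ?_) tendsto_id
    have := k.lt_two_pow_self
    simp only [id]; omega
  have h2 := h.comp hsub
  have hc : Continuous fun M : Matrix (Fin d) (Fin d) ℝ => M.trace := by fun_prop
  have h3 := (hc.tendsto _).comp h2
  refine le_of_tendsto h3 (Eventually.of_forall fun k => ?_)
  simp only [Function.comp]
  have e : (2 ^ k - 1 + 1 : ℕ) = 2 ^ k := Nat.sub_add_cancel Nat.one_le_two_pow
  have e2 : (((2 ^ k - 1 : ℕ):ℝ) + 1) = 2 ^ k := by exact_mod_cast e
  rw [e, e2]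
  refine ((trace_pow_aux k).2 _ _ ?_ ?_).trans (le_of_eq ?_)
  · rw [← Matrix.exp_transpose, Matrix.transpose_smul, hA]
  · rw [← Matrix.exp_transpose, Matrix.transpose_smul, hB]
  · have h5 : ∀ C : Matrix (Fin d) (Fin d) ℝ,
        NormedSpace.exp ((1 / (2:ℝ) ^ k) • C) ^ 2 ^ k = NormedSpace.exp C := by
      intro C
      rw [← Matrix.exp_nsmul, ← Nat.cast_smul_eq_nsmul ℝ, smul_smul]
      push_cast
      rw [mul_one_div_cancel (by positivity), one_smul]
    rw [h5, h5]


lemma exp_proj {d : ℕ} (P : Matrix (Fin d) (Fin d) ℝ) (hP : P * P = P) (a b : ℝ) :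
    NormedSpace.exp (a • P + b • (1 - P)) = Real.exp a • P + Real.exp b • (1 - P) := by
  have hpow : ∀ k : ℕ, (a • P + b • (1 - P)) ^ k = a ^ k • P + b ^ k • (1 - P) := by
    intro k
    induction k with
    | zero => simp
    | succ k ih =>
      rw [pow_succ, ih]
      have h1 : (1 - P) * (1 - P) = 1 - P := by
        rw [sub_mul, mul_sub, mul_sub, hP]; simp
      have h2 : P * (1 - P) = 0 := by rw [mul_sub, hP]; simp
      have h3 : (1 - P) * P = 0 := by rw [sub_mul, hP]; simp
      simp only [add_mul, mul_add, smul_mul_smul_comm, hP, h1, h2, h3, smul_zero, add_zero,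
        zero_add, pow_succ]
  have h1 := NormedSpace.exp_series_hasSum_exp' (𝕂 := ℝ) (a • P + b • (1 - P))
  have ha := NormedSpace.exp_series_hasSum_exp' (𝕂 := ℝ) a
  have hb := NormedSpace.exp_series_hasSum_exp' (𝕂 := ℝ) b
  rw [← Real.exp_eq_exp_ℝ] at ha hb
  have h2 := (ha.smul_const P).add (hb.smul_const (1 - P))
  refine h1.unique (h2.congr_fun ?_)
  intro k
  simp only [hpow, smul_add, smul_smul, smul_eq_mul]

lemma trace_exp_spectral {d : ℕ} (A : Matrix (Fin d) (Fin d) ℝ) (hA : A.IsHermitian) (θ : ℝ) :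
    (NormedSpace.exp (θ • A)).trace = ∑ i, Real.exp (θ * hA.eigenvalues i) := by
  have h := hA.spectral_theorem
  set U := hA.eigenvectorUnitary
  have h2 : θ • A = (U : Matrix (Fin d) (Fin d) ℝ) * (Matrix.diagonal fun i => θ * hA.eigenvalues i)
      * (U : Matrix (Fin d) (Fin d) ℝ)⁻¹ := by
    have hU : (U : Matrix (Fin d) (Fin d) ℝ)⁻¹ = star (U : Matrix (Fin d) (Fin d) ℝ) :=
      Matrix.inv_eq_left_inv (Unitary.coe_star_mul_self U)
    rw [hU]
    have e : (Matrix.diagonal fun i => θ * hA.eigenvalues i) =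
      θ • Matrix.diagonal (hA.eigenvalues) := by
      rw [← Matrix.diagonal_smul]; rfl
    conv_lhs => rw [h]
    rw [e, Unitary.conjStarAlgAut_apply]
    simp
  have hu : IsUnit (U : Matrix (Fin d) (Fin d) ℝ) := (Unitary.toUnits U).isUnit
  rw [h2, Matrix.exp_conj _ _ hu, Matrix.trace_mul_comm, ← mul_assoc,
    Matrix.nonsing_inv_mul _ ((Matrix.isUnit_iff_isUnit_det _).1 hu), one_mul,
    Matrix.exp_diagonal, Matrix.trace_diagonal]
  simp [Real.exp_eq_exp_ℝ]

lemma trace_exp_ge {d : ℕ} (A : Matrix (Fin d) (Fin d) ℝ) (hA : Aᵀ = A) (hd : 0 < d)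
    (θ : ℝ) :
    Real.exp (θ * ‖A‖) ≤ (NormedSpace.exp (θ • A)).trace + (NormedSpace.exp ((-θ) • A)).trace := by
  have hA' : A.IsHermitian := by
    rw [Matrix.IsHermitian, Matrix.conjTranspose_eq_transpose_of_trivial, hA]
  have : Nonempty (Fin d) := ⟨⟨0, hd⟩⟩
  have hn : ‖A‖ = ‖hA'.eigenvalues‖ := by
    have h := hA'.spectral_theorem
    conv_lhs => rw [h]
    rw [Unitary.conjStarAlgAut_apply, ← Unitary.coe_star, CStarRing.norm_mul_coe_unitary, CStarRing.norm_coe_unitary_mul,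
      Matrix.l2_opNorm_diagonal]
    rfl
  obtain ⟨i, hi⟩ : ∃ i, ‖hA'.eigenvalues‖ = |hA'.eigenvalues i| := by
    obtain ⟨i, hi⟩ := Finite.exists_max fun i => |hA'.eigenvalues i|
    refine ⟨i, le_antisymm ((pi_norm_le_iff_of_nonneg (abs_nonneg _)).2 hi) (norm_le_pi_norm hA'.eigenvalues i)⟩
  rw [trace_exp_spectral A hA', trace_exp_spectral A hA', hn, hi, ← Finset.sum_add_distrib]
  refine le_trans ?_ (Finset.single_le_sum (f := fun i => Real.exp (θ * hA'.eigenvalues i) +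
    Real.exp (-θ * hA'.eigenvalues i)) (fun j _ => by positivity) (Finset.mem_univ i))
  rcases abs_cases (hA'.eigenvalues i) with ⟨h, _⟩ | ⟨h, _⟩
  · rw [h]; have := Real.exp_pos (-θ * hA'.eigenvalues i); linarith
  · rw [h]; have := Real.exp_pos (θ * hA'.eigenvalues i)
    rw [show θ * -hA'.eigenvalues i = -θ * hA'.eigenvalues i by ring]; linarith

lemma exp_bernstein (x b : ℝ) (hx : |x| ≤ b) (hb : b < 3) :
    Real.exp x ≤ 1 + x + x ^ 2 / 2 / (1 - b / 3) := by
  have h1 := NormedSpace.exp_series_hasSum_exp' (𝕂 := ℝ) x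
  rw [← Real.exp_eq_exp_ℝ] at h1
  have hb0 : 0 ≤ b := (abs_nonneg _).trans hx
  have h2 := (hasSum_nat_add_iff' 2).2 h1
  have hg := (hasSum_geometric_of_lt_one (r := b / 3) (by positivity) (by linarith)).mul_left (x ^ 2 / 2)
  have h3 := hasSum_le (fun k => ?_) h2 hg
  · simp [Finset.sum_range_succ] at h3
    rw [div_eq_mul_inv (x ^ 2 / 2)]
    linarith
  · have hf : (2 * 3 ^ k : ℝ) ≤ ((k + 2).factorial : ℝ) := by
      have : 2 * 3 ^ k ≤ (k + 2).factorial := by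
        have := Nat.factorial_mul_pow_le_factorial (m := 2) (n := k)
        rw [add_comm k 2]; simpa using this
      exact_mod_cast this
    rw [smul_eq_mul, inv_mul_eq_div]
    have h4 : x ^ (k + 2) ≤ b ^ k * x ^ 2 := by
      calc x ^ (k+2) ≤ |x ^ (k+2)| := le_abs_self _
        _ = |x| ^ k * x ^ 2 := by rw [abs_pow, pow_add, sq_abs]
        _ ≤ _ := by gcongr
    calc x ^ (k + 2) / ((k+2).factorial : ℝ) ≤ b ^ k * x ^ 2 / ((k+2).factorial : ℝ) := by gcongr
      _ ≤ b ^ k * x ^ 2 / (2 * 3 ^ k) := by gcongr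
      _ = _ := by rw [div_pow]; field_simp

lemma mgf_scalar (K s σ : ℝ) (hK : 1 ≤ K) (hσ : |σ| = s) (hs : K * s < 3) :
    (Real.exp (σ * K) + K * Real.exp (-σ)) / (K + 1) ≤
      Real.exp (K * s ^ 2 / 2 / (1 - K * s / 3)) := by
  have hs0 : 0 ≤ s := hσ ▸ abs_nonneg σ
  have h1 := exp_bernstein (σ * K) (K * s)
    (by rw [abs_mul, hσ, abs_of_pos (by linarith : 0 < K), mul_comm]) hs
  have h2 := exp_bernstein (-σ) (K * s) (by rw [abs_neg, hσ]; nlinarith) hs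
  have hq : σ ^ 2 = s ^ 2 := by rw [← hσ, sq_abs]
  refine le_trans ?_ (Real.add_one_le_exp _)
  rw [div_le_iff₀ (by linarith)]
  have hD : 0 < 1 - K * s / 3 := by linarith
  refine (add_le_add h1 (mul_le_mul_of_nonneg_left h2 (by linarith))).trans (le_of_eq ?_)
  rw [neg_sq, mul_pow, hq]
  field_simp
  ring

lemma lintegral_pi_trace_exp {d : ℕ} (μ : Measure (EuclideanSpace ℝ (Fin d)))
    [IsProbabilityMeasure μ] (f : EuclideanSpace ℝ (Fin d) → Matrix (Fin d) (Fin d) ℝ)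
    (hf : Continuous f) (hfs : ∀ x, (f x)ᵀ = f x) (c : ENNReal)
    (hc : ∀ B : Matrix (Fin d) (Fin d) ℝ, Bᵀ = B →
      ∫⁻ x, ENNReal.ofReal (NormedSpace.exp B * NormedSpace.exp (f x)).trace ∂μ ≤
        c * ENNReal.ofReal (NormedSpace.exp B).trace) (n : ℕ) :
    ∀ B : Matrix (Fin d) (Fin d) ℝ, Bᵀ = B →
      ∫⁻ x : Fin n → EuclideanSpace ℝ (Fin d),
        ENNReal.ofReal (NormedSpace.exp (B + ∑ i, f (x i))).trace ∂(Measure.pi fun _ => μ) ≤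
      c ^ n * ENNReal.ofReal (NormedSpace.exp B).trace := by
  let _ : NormedAlgebra ℚ (Matrix (Fin d) (Fin d) ℝ) := NormedAlgebra.restrictScalars ℚ ℝ _
  have hexp : Continuous (NormedSpace.exp : Matrix (Fin d) (Fin d) ℝ → Matrix (Fin d) (Fin d) ℝ) :=
    NormedSpace.exp_continuous
  have htr : Continuous fun M : Matrix (Fin d) (Fin d) ℝ => M.trace := by fun_prop
  induction n with
  | zero => intro B hB; simp
  | succ n ih =>
    intro B hB
    have hmp := (measurePreserving_piFinSuccAbove
      (fun _ : Fin (n+1) => μ) 0).symm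
    rw [← hmp.lintegral_comp_emb (MeasurableEquiv.measurableEmbedding _)]
    simp only [MeasurableEquiv.piFinSuccAbove_symm_apply, Fin.insertNthEquiv, Fin.insertNth_zero,
      Equiv.coe_fn_mk, Fin.sum_univ_succ, Fin.cons_zero, Fin.cons_succ]
    rw [lintegral_prod]
    · simp only [← add_assoc]
      calc _ ≤ ∫⁻ x, c ^ n * ENNReal.ofReal
              (NormedSpace.exp B * NormedSpace.exp (f x)).trace ∂μ := by
            refine lintegral_mono fun x => (ih (B + f x) ?_).trans ?_
            · rw [Matrix.transpose_add, hB, hfs]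
            · gcongr
              exact golden_thompson _ _ hB (hfs x)
        _ ≤ c ^ n * (c * ENNReal.ofReal (NormedSpace.exp B).trace) := by
            rw [lintegral_const_mul]
            · gcongr
              exact hc B hB
            · exact (ENNReal.continuous_ofReal.comp (htr.comp
                (continuous_const.mul (hexp.comp hf)))).measurable
        _ = _ := by rw [pow_succ, mul_assoc]
    · refine Continuous.aemeasurable (ENNReal.continuous_ofReal.comp (htr.comp (hexp.comp ?_)))
      refine continuous_const.add ((hf.comp continuous_fst).add ?_)
      exact continuous_finsetSum _ fun i _ => hf.comp ((continuous_apply i).comp continuous_snd)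

lemma second_moment {d : ℕ} (hd : 0 < d) (r : ℝ) (μ : Measure (EuclideanSpace ℝ (Fin d)))
    [IsProbabilityMeasure μ]
    (hsupp : ∀ᵐ x ∂μ, ‖x‖ ^ 2 = r)
    (hinv : ∀ Q : EuclideanSpace ℝ (Fin d) ≃ₗᵢ[ℝ] EuclideanSpace ℝ (Fin d),
      Measure.map (⇑Q) μ = μ) (i j : Fin d) :
    Integrable (fun x : EuclideanSpace ℝ (Fin d) => x i * x j) μ ∧
    ∫ x, x i * x j ∂μ = if i = j then r / d else 0 := by
  have hint : ∀ i j : Fin d, Integrable (fun x : EuclideanSpace ℝ (Fin d) => x i * x j) μ := by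
    intro i j
    refine Integrable.of_bound (C := r) (Continuous.aestronglyMeasurable (by fun_prop)) ?_
    filter_upwards [hsupp] with x hx
    rw [norm_mul, ← hx, sq]
    gcongr <;> exact PiLp.norm_apply_le x _
  refine ⟨hint i j, ?_⟩
  have hch : ∀ (Q : EuclideanSpace ℝ (Fin d) ≃ₗᵢ[ℝ] EuclideanSpace ℝ (Fin d)) (i j : Fin d),
      ∫ x, x i * x j ∂μ = ∫ x, (Q x) i * (Q x) j ∂μ := by
    intro Q i j
    conv_lhs => rw [← hinv Q]
    rw [integral_map Q.continuous.aemeasurable (Continuous.aestronglyMeasurable (by fun_prop))]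
  split_ifs with h
  · subst h
    have hall : ∀ k : Fin d, ∫ x, x k * x k ∂μ = ∫ x, x i * x i ∂μ := by
      intro k
      rw [hch (LinearIsometryEquiv.piLpCongrLeft 2 ℝ ℝ (Equiv.swap i k)) k k]
      simp [LinearIsometryEquiv.piLpCongrLeft_apply, Equiv.piCongrLeft', Equiv.symm_swap]
    have hsum : ∑ k : Fin d, ∫ x, x k * x k ∂μ = r := by
      rw [← integral_finsetSum _ fun k _ => hint k k]
      rw [integral_congr_ae (g := fun _ => r)]
      · simp
      · filter_upwards [hsupp] with x hx
        rw [← hx, EuclideanSpace.norm_sq_eq]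
        simp [sq]
    simp only [hall, Finset.sum_const, Finset.card_univ, Fintype.card_fin, nsmul_eq_mul] at hsum
    rw [eq_div_iff (by positivity), mul_comm]
    exact hsum
  · have h1 := hch (LinearIsometryEquiv.piLpCongrRight 2
      (fun k : Fin d => if k = i then LinearIsometryEquiv.neg ℝ else LinearIsometryEquiv.refl ℝ ℝ)) i j
    have h2 : ∀ x : EuclideanSpace ℝ (Fin d), ((LinearIsometryEquiv.piLpCongrRight 2
      (fun k : Fin d => if k = i then LinearIsometryEquiv.neg ℝ else LinearIsometryEquiv.refl ℝ ℝ)) x) i *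
      ((LinearIsometryEquiv.piLpCongrRight 2
      (fun k : Fin d => if k = i then LinearIsometryEquiv.neg ℝ else LinearIsometryEquiv.refl ℝ ℝ)) x) j
      = - (x i * x j) := by
      intro x
      simp [LinearIsometryEquiv.piLpCongrRight_apply, Ne.symm h]
    simp only [h2, integral_neg] at h1
    linarith

/-- The centred, rescaled rank-one matrix `s (n x xᵀ - 1)`. -/
def centredMat (d n : ℕ) (s : ℝ) (x : EuclideanSpace ℝ (Fin d)) : Matrix (Fin d) (Fin d) ℝ :=
  s • ((n : ℝ) • Matrix.vecMulVec (WithLp.ofLp x) (WithLp.ofLp x) - 1)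

lemma centredMat_symm (d n : ℕ) (s : ℝ) (x : EuclideanSpace ℝ (Fin d)) :
    (centredMat d n s x)ᵀ = centredMat d n s x := by
  simp [centredMat, Matrix.transpose_vecMulVec]

lemma centredMat_cont (d n : ℕ) (s : ℝ) : Continuous (centredMat d n s) := by
  unfold centredMat
  have : Continuous fun x : EuclideanSpace ℝ (Fin d) =>
      Matrix.vecMulVec (WithLp.ofLp x) (WithLp.ofLp x) := by
    refine continuous_matrix fun i j => ?_
    simp only [Matrix.vecMulVec_apply]
    fun_prop
  fun_prop

lemma trace_mul_exp_centred {d n : ℕ} (hd : 0 < d) (hn : 0 < n) (s : ℝ)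
    (x : EuclideanSpace ℝ (Fin d)) (hx : ‖x‖ ^ 2 = (d : ℝ) / n) (M : Matrix (Fin d) (Fin d) ℝ) :
    (M * NormedSpace.exp (centredMat d n s x)).trace =
      Real.exp (-s) * M.trace + ((Real.exp (s * (d - 1)) - Real.exp (-s)) * (n / d)) *
        ∑ i, ∑ j, M i j * (x j * x i) := by
  have hd' : (d : ℝ) ≠ 0 := by positivity
  have hn' : (n : ℝ) ≠ 0 := by positivity
  set V := Matrix.vecMulVec (WithLp.ofLp x) (WithLp.ofLp x) with hV
  set P := ((n : ℝ) / d) • V with hPdef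
  have hVV : V * V = ((d : ℝ) / n) • V := by
    rw [hV, Matrix.vecMulVec_mul_vecMulVec, ← hx, EuclideanSpace.norm_sq_eq]
    ext i j
    simp [Matrix.vecMulVec_apply, dotProduct, sq]
    ring
  have hP : P * P = P := by
    rw [hPdef, smul_mul_smul_comm, hVV, smul_smul]
    congr 1
    field_simp
  have hc : centredMat d n s x = (s * (d - 1)) • P + (-s) • (1 - P) := by
    have : (n : ℝ) • V = (d : ℝ) • P := by
      rw [hPdef, smul_smul]; congr 1; field_simp
    unfold centredMat
    rw [← hV, this]
    module
  rw [hc, exp_proj P hP]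
  have h2 : Real.exp (s * (d - 1)) • P + Real.exp (-s) • (1 - P) =
      Real.exp (-s) • (1 : Matrix (Fin d) (Fin d) ℝ) +
      ((Real.exp (s * (d - 1)) - Real.exp (-s)) * (n / d)) • V := by
    rw [hPdef]; module
  rw [h2, mul_add, Matrix.trace_add, mul_smul_comm, mul_smul_comm, Matrix.trace_smul,
    Matrix.trace_smul, mul_one, smul_eq_mul, smul_eq_mul]
  congr 2

lemma trace_exp_nonneg {d : ℕ} (B : Matrix (Fin d) (Fin d) ℝ) (hB : Bᵀ = B)  :
    0 ≤ (NormedSpace.exp B).trace := by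
  have h : NormedSpace.exp B =
      (NormedSpace.exp ((1/2 : ℝ) • B))ᵀ * NormedSpace.exp ((1/2 : ℝ) • B) := by
    rw [← Matrix.exp_transpose, Matrix.transpose_smul, hB, ← Matrix.exp_add_of_commute _ _ rfl,
      ← add_smul]
    norm_num
  rw [h]
  simp only [Matrix.trace, Matrix.mul_apply, Matrix.diag_apply, Matrix.transpose_apply]
  exact Finset.sum_nonneg fun i _ => Finset.sum_nonneg fun j _ => mul_self_nonneg _

lemma lintegral_centred {d n : ℕ} (hd : 0 < d) (hn : 0 < n) (s : ℝ)
    (μ : Measure (EuclideanSpace ℝ (Fin d))) [IsProbabilityMeasure μ]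
    (hsupp : ∀ᵐ x ∂μ, ‖x‖ ^ 2 = (d : ℝ) / n)
    (hinv : ∀ Q : EuclideanSpace ℝ (Fin d) ≃ₗᵢ[ℝ] EuclideanSpace ℝ (Fin d),
      Measure.map (⇑Q) μ = μ) (B : Matrix (Fin d) (Fin d) ℝ) (hB : Bᵀ = B) :
    ∫⁻ x, ENNReal.ofReal (NormedSpace.exp B * NormedSpace.exp (centredMat d n s x)).trace ∂μ =
      ENNReal.ofReal ((Real.exp (s * (d - 1)) + (d - 1) * Real.exp (-s)) / d) *
        ENNReal.ofReal (NormedSpace.exp B).trace := by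
  set M := NormedSpace.exp B
  have hm := second_moment hd _ μ hsupp hinv
  have hae : (fun x => (M * NormedSpace.exp (centredMat d n s x)).trace) =ᵐ[μ]
    fun x => Real.exp (-s) * M.trace + ((Real.exp (s * (d - 1)) - Real.exp (-s)) * (n / d)) *
        ∑ i, ∑ j, M i j * (x j * x i) := by
    filter_upwards [hsupp] with x hx using trace_mul_exp_centred hd hn s x hx M
  have hi1 : Integrable (fun x : EuclideanSpace ℝ (Fin d) => ∑ i, ∑ j, M i j * (x j * x i)) μ :=
    integrable_finsetSum _ fun i _ => integrable_finsetSum _ fun j _ => (hm j i).1.const_mul _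
  have hi2 := (integrable_const (μ := μ) (Real.exp (-s) * M.trace)).add
    (hi1.const_mul ((Real.exp (s * (d - 1)) - Real.exp (-s)) * (n / d)))
  have hint : ∫ x, (M * NormedSpace.exp (centredMat d n s x)).trace ∂μ =
      ((Real.exp (s * (d - 1)) + (d - 1) * Real.exp (-s)) / d) * M.trace := by
    rw [integral_congr_ae hae, integral_add (integrable_const _) (hi1.const_mul _),
      integral_const_mul, integral_const_mul]
    have hgen : ∀ g : Fin d → Fin d → ℝ,
        ∫ x : EuclideanSpace ℝ (Fin d), ∑ i, ∑ j, g i j * (x j * x i) ∂μ =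
        (∑ i, g i i) * ((d : ℝ) / n / d) := by
      intro g
      rw [integral_finsetSum _ fun i _ => integrable_finsetSum _ fun j _ => (hm j i).1.const_mul _,
        Finset.sum_mul]
      refine Finset.sum_congr rfl fun i _ => ?_
      rw [integral_finsetSum _ fun j _ => (hm j i).1.const_mul _]
      simp only [integral_const_mul, (hm _ i).2]
      simp
    rw [hgen (fun i j => M i j)]
    rw [show ∑ i, M i i = M.trace from rfl]
    simp
    field_simp
    ring
  have hs2 : 0 ≤ (Real.exp (s * (d - 1)) + (d - 1) * Real.exp (-s)) / d := by
    have : (1:ℝ) ≤ d := by exact_mod_cast hd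
    have h1 : 0 ≤ (d:ℝ) - 1 := by linarith
    positivity
  rw [← ENNReal.ofReal_mul hs2, ← hint, ofReal_integral_eq_lintegral_ofReal (hi2.congr hae.symm)]
  filter_upwards with x
  exact (trace_exp_nonneg _ (by rw [Matrix.transpose_add, hB, centredMat_symm])).trans
    (golden_thompson B _ hB (centredMat_symm d n s x))

lemma frame_eq {d n : ℕ} (x : Fin n → EuclideanSpace ℝ (Fin d)) :
    frameOperator x - 1 = Matrix.toEuclideanCLM (n := Fin d) (𝕜 := ℝ)
      (∑ i, Matrix.vecMulVec (WithLp.ofLp (x i)) (WithLp.ofLp (x i)) - 1) := by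
  rw [map_sub, map_one, map_sum, frameOperator]
  congr 1
  refine Finset.sum_congr rfl fun i _ => ?_
  ext v k
  simp [Matrix.vecMulVec_mulVec, PiLp.inner_apply, dotProduct]
  simp only [mul_comm]

end GT

/-- **Sample-complexity form of sphere concentration.**
Let `d ≥ 2`, `δ ∈ (0,1)`, `ε > 0`, and `C = (2d - 2 + 2ε(d-1)/3)/ε²`. If `n ≥ C·log(2d/δ)`
and `x₁, …, xₙ` are i.i.d. uniform on the sphere of radius `√(d/n)` in `ℝ^d` (their joint
law being the `n`-fold product of the uniform probability measure `μ` on that sphere,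
characterized as a rotation-invariant probability measure supported on the sphere), then
`ℙ(‖S - I‖_op ≥ ε) ≤ δ`. -/
theorem sphere_concentration_sample_complexity
    (d : ℕ) (hd : 2 ≤ d) (δ ε : ℝ) (hδ : δ ∈ Set.Ioo (0 : ℝ) 1) (hε : 0 < ε)
    (n : ℕ) (hn : 0 < n)
    (hnC : ((2 * d - 2 + 2 * ε * (d - 1) / 3) / ε ^ 2) * Real.log (2 * d / δ) ≤ n)
    (μ : Measure (EuclideanSpace ℝ (Fin d))) [IsProbabilityMeasure μ]
    (hsupp : μ (Metric.sphere (0 : EuclideanSpace ℝ (Fin d)) (Real.sqrt (d / n))) = 1)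
    (hinv : ∀ Q : EuclideanSpace ℝ (Fin d) ≃ₗᵢ[ℝ] EuclideanSpace ℝ (Fin d),
      Measure.map (⇑Q) μ = μ) :
    (Measure.pi fun _ : Fin n => μ)
        {x | ε ≤ ‖frameOperator x - 1‖}
      ≤ ENNReal.ofReal δ := by
  open scoped Matrix Matrix.Norms.L2Operator in
  have hd0 : 0 < d := by omega
  have hsupp' : ∀ᵐ x ∂μ, ‖x‖ ^ 2 = (d : ℝ) / n := by
    have h1 : ∀ᵐ x ∂μ, x ∈ Metric.sphere (0 : EuclideanSpace ℝ (Fin d)) (Real.sqrt (d / n)) :=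
      (mem_ae_iff_prob_eq_one Metric.isClosed_sphere.measurableSet).2 hsupp
    filter_upwards [h1] with x hx
    rw [mem_sphere_zero_iff_norm] at hx
    rw [hx, Real.sq_sqrt (by positivity)]
  have hd2 : (2 : ℝ) ≤ d := by exact_mod_cast hd
  set K : ℝ := (d : ℝ) - 1 with hKdef
  have hK : 1 ≤ K := by linarith
  have hdK : (d : ℝ) = K + 1 := by linarith
  set s : ℝ := ε / (K * (1 + ε / 3)) with hsdef
  have hs : 0 < s := by positivity
  have hKs : K * s = ε / (1 + ε / 3) := by rw [hsdef]; field_simp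
  have hKs3 : K * s < 3 := by
    rw [hKs, div_lt_iff₀ (by positivity)]; linarith
  set C : ℝ := Real.exp (K * s ^ 2 / 2 / (1 - K * s / 3)) with hC
  have hCe : K * s ^ 2 / 2 / (1 - K * s / 3) = s * ε / 2 := by
    have : 1 - K * s / 3 = 1 / (1 + ε / 3) := by rw [hKs]; field_simp; ring
    rw [this, sq, ← mul_assoc, hKs]
    field_simp
  have hbound : ∀ σ : ℝ, |σ| = s →
      ∫⁻ x : Fin n → EuclideanSpace ℝ (Fin d),
        ENNReal.ofReal (NormedSpace.exp (∑ i, centredMat d n σ (x i))).trace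
          ∂(Measure.pi fun _ => μ) ≤ ENNReal.ofReal (C ^ n * d) := by
    intro σ hσ
    have h := lintegral_pi_trace_exp μ (centredMat d n σ) (centredMat_cont d n σ)
      (centredMat_symm d n σ) (ENNReal.ofReal C) (fun B hB => ?_) n 0 (by simp)
    · simp only [zero_add, NormedSpace.exp_zero, Matrix.trace_one, Fintype.card_fin] at h
      rwa [← ENNReal.ofReal_pow (by positivity), ← ENNReal.ofReal_mul (by positivity)] at h
    · rw [lintegral_centred hd0 hn σ μ hsupp' hinv B hB]
      gcongr
      have := mgf_scalar K s σ hK hσ hKs3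
      rw [← hKdef, hdK]
      exact this
  have hdet : ∀ x : Fin n → EuclideanSpace ℝ (Fin d), ε ≤ ‖frameOperator x - 1‖ →
      ENNReal.ofReal (Real.exp (n * s * ε)) ≤
        ENNReal.ofReal (NormedSpace.exp (∑ i, centredMat d n s (x i))).trace +
        ENNReal.ofReal (NormedSpace.exp (∑ i, centredMat d n (-s) (x i))).trace := by
    intro x hx
    rw [frame_eq, Matrix.l2_opNorm_toEuclideanCLM] at hx
    set A := ∑ i, Matrix.vecMulVec (WithLp.ofLp (x i)) (WithLp.ofLp (x i)) - 1 with hA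
    have hAs : Aᵀ = A := by
      simp [hA, Matrix.transpose_sum, Matrix.transpose_vecMulVec]
    have hsum : ∀ σ : ℝ, ∑ i, centredMat d n σ (x i) = (n * σ) • A := by
      intro σ
      simp only [centredMat, ← Finset.smul_sum, Finset.sum_sub_distrib, hA, Finset.sum_const,
        Finset.card_univ, Fintype.card_fin]
      rw [← Nat.cast_smul_eq_nsmul ℝ]
      module
    have h1 := trace_exp_ge A hAs hd0 (n * s)
    rw [hsum, hsum, ← ENNReal.ofReal_add (trace_exp_nonneg _ (by simp [hAs]))
      (trace_exp_nonneg _ (by simp [hAs]))]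
    apply ENNReal.ofReal_le_ofReal
    rw [mul_neg]
    refine le_trans ?_ h1
    gcongr
  have hcont : ∀ σ : ℝ, Measurable fun x : Fin n → EuclideanSpace ℝ (Fin d) =>
      ENNReal.ofReal (NormedSpace.exp (∑ i, centredMat d n σ (x i))).trace := by
    intro σ
    let _ : NormedAlgebra ℚ (Matrix (Fin d) (Fin d) ℝ) := NormedAlgebra.restrictScalars ℚ ℝ _
    have hexp : Continuous
        (NormedSpace.exp : Matrix (Fin d) (Fin d) ℝ → Matrix (Fin d) (Fin d) ℝ) :=
      NormedSpace.exp_continuous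
    have htr : Continuous fun M : Matrix (Fin d) (Fin d) ℝ => M.trace := by fun_prop
    exact (ENNReal.continuous_ofReal.comp (htr.comp (hexp.comp (continuous_finsetSum _ fun i _ =>
      (centredMat_cont d n σ).comp (continuous_apply i))))).measurable
  have hmarkov := mul_meas_ge_le_lintegral (μ := Measure.pi fun _ : Fin n => μ)
    ((hcont s).add (hcont (-s))) (ENNReal.ofReal (Real.exp (n * s * ε)))
  simp only [Pi.add_apply] at hmarkov
  rw [lintegral_add_left (hcont s)] at hmarkov
  have hfin := hmarkov.trans (add_le_add (hbound s (abs_of_pos hs))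
    (hbound (-s) (by rw [abs_neg, abs_of_pos hs])))
  have hmono := measure_mono (μ := Measure.pi fun _ : Fin n => μ)
    (show {x | ε ≤ ‖frameOperator x - 1‖} ⊆ _ from hdet)
  rw [← ENNReal.ofReal_add (by positivity) (by positivity)] at hfin
  refine hmono.trans ?_
  have hE := Real.exp_pos (n * s * ε)
  have h6 : (Measure.pi fun _ : Fin n => μ) {x | ENNReal.ofReal (Real.exp (n * s * ε)) ≤
        ENNReal.ofReal (NormedSpace.exp (∑ i, centredMat d n s (x i))).trace +
        ENNReal.ofReal (NormedSpace.exp (∑ i, centredMat d n (-s) (x i))).trace} ≤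
      ENNReal.ofReal (C ^ n * d + C ^ n * d) / ENNReal.ofReal (Real.exp (n * s * ε)) := by
    rw [ENNReal.le_div_iff_mul_le (Or.inl (by simpa using hE)) (Or.inl ENNReal.ofReal_ne_top),
      mul_comm]
    exact hfin
  refine h6.trans ?_
  rw [← ENNReal.ofReal_div_of_pos hE]
  apply ENNReal.ofReal_le_ofReal
  rw [div_le_iff₀ hE, hC, hCe, ← Real.exp_nat_mul]
  have hlog : Real.log (2 * d / δ) ≤ n * (s * ε / 2) := by
    have e1 : (2 * (d:ℝ) - 2 + 2 * ε * K / 3) / ε ^ 2 = 2 / (s * ε) := by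
      rw [hsdef, hdK]; field_simp; ring
    rw [e1] at hnC
    rw [div_mul_eq_mul_div, div_le_iff₀ (by positivity)] at hnC
    linarith
  have hδ0 := hδ.1
  rw [Real.log_le_iff_le_exp (by positivity), div_le_iff₀ hδ0] at hlog
  have e2 : Real.exp (n * s * ε) = Real.exp (n * (s * ε / 2)) * Real.exp (n * (s * ε / 2)) := by
    rw [← Real.exp_add]; congr 1; ring
  rw [e2]
  have := Real.exp_pos (n * (s * ε / 2))
  nlinarith
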